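/- Let P be a finite set of points in general position in ℝ², and let a, b be two distinct points of P. Let S be a set of points such that for each s ∈ S, the triangle s,a,b contains no point of P in its interior, all points of S lie strictly on the same side of the line through a and b, and no 5-hole of P has s together with a or b among its vertices in a certain convex pentagon configuration. If there is a point s ∈ S in the interior of the convex hull of S, then the rays from s through a and through b cross the same edge of the convex hull of S, and consequently there is a convex pentagon s, q, a, b, r with q, r consecutive vertices of the hull of S; by the emptying argument this yields a 5-hole of the form s, q′, a, b, r′. Hence if no such 5-hole exists, S is in convex position. -/

import Mathlib

open scoped Classical

noncomputable section

abbrev Pt : Type := EuclideanSpace ℝ (Fin 2)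

/-- No three distinct points of `P` are collinear. -/
def GenPos (P : Set Pt) : Prop :=
  ∀ a ∈ P, ∀ b ∈ P, ∀ c ∈ P, a ≠ b → a ≠ c → b ≠ c → ¬ Collinear ℝ ({a, b, c} : Set Pt)

/-- A set of points is in convex position if every point is an extreme point:
no point lies in the convex hull of the others. -/
def ConvexPos (S : Set Pt) : Prop := ∀ p ∈ S, p ∉ convexHull ℝ (S \ {p})

/-- The 5-holes of `P`: 5-element subsets of `P` in convex position whose
convex hull has no point of `P` in its interior. -/
def Holes5 (P : Set Pt) : Set (Finset Pt) :=
  {H | H.card = 5 ∧ ↑H ⊆ P ∧ ConvexPos ↑H ∧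
    ∀ x ∈ P, x ∉ interior (convexHull ℝ (H : Set Pt))}

/-- Orientation determinant of the triple `(o, a, b)`. -/
def det2 (o a b : Pt) : ℝ :=
  (a 0 - o 0) * (b 1 - o 1) - (a 1 - o 1) * (b 0 - o 0)

/-- `v` lists the vertices of a strictly convex polygon in cyclic order:
for every edge `v i v (i+1)`, all other vertices lie strictly on the same side. -/
def ConvexCyclicOrder {n : ℕ} [NeZero n] (v : Fin n → Pt) : Prop :=
  ∃ σ : ℝ, (σ = 1 ∨ σ = -1) ∧
    ∀ i j : Fin n, j ≠ i → j ≠ i + 1 → 0 < σ * det2 (v i) (v (i + 1)) (v j)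

/-- `x` lies in the closed angular region at `p` spanned by the rays from `p`
through `a` and through `c` (the convex cone generated by the two rays). -/
def InAngle (a p c x : Pt) : Prop :=
  ∃ s t : ℝ, 0 ≤ s ∧ 0 ≤ t ∧ x = p + s • (a - p) + t • (c - p)

/-- The extreme points (convex-hull vertices) of a planar point set. -/
def extremePts (P : Set Pt) : Set Pt := {p ∈ P | p ∉ convexHull ℝ (P \ {p})}

/-- What remains of `P` after peeling off the first `n` convex layers. -/
def layerRest (P : Set Pt) : ℕ → Set Pt
  | 0 => P
  | n + 1 => layerRest P n \ extremePts (layerRest P n)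

/-- The `i`-th convex layer of `P` (0-indexed). -/
def layer (P : Set Pt) (i : ℕ) : Set Pt := extremePts (layerRest P i)

/-- The number of convex layers of `P`. -/
def numLayers (P : Set Pt) : ℕ := {i | (layer P i).Nonempty}.ncard

theorem det2_comb (u w x y : Pt) (s t : ℝ) (h : s + t = 1) :
    det2 u w (s • x + t • y) = s * det2 u w x + t * det2 u w y := by
  have : t = 1 - s := by linarith
  subst this
  simp [det2]
  ring

theorem det2_cyc (u v w : Pt) : det2 u v w = det2 v w u := by
  simp only [det2]; ring

theorem det2_swap (u v w : Pt) : det2 u v w = - det2 v u w := by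
  simp only [det2]; ring

theorem det2_bary (p q a u w x : Pt) :
    det2 p q a * det2 u w x = det2 q a x * det2 u w p + det2 a p x * det2 u w q
      + det2 p q x * det2 u w a := by
  simp only [det2]; ring

theorem hull_pos (T : Set Pt) (u w : Pt) (h : ∀ v ∈ T, 0 < det2 u w v) :
    ∀ x ∈ convexHull ℝ T, 0 < det2 u w x := by
  have hc : Convex ℝ {x : Pt | 0 < det2 u w x} := by
    intro x hx y hy s t hs ht hst
    simp only [Set.mem_setOf_eq] at *
    rw [det2_comb _ _ _ _ _ _ hst]
    rcases hs.eq_or_lt with h0 | h0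
    · subst h0
      have : t = 1 := by linarith
      subst this; simpa using hy
    · have := mul_pos h0 hx
      have := mul_nonneg ht hy.le
      linarith
  exact fun x hx => convexHull_min (fun v hv => h v hv) hc hx

theorem hull_nonneg (T : Set Pt) (u w : Pt) (h : ∀ v ∈ T, 0 ≤ det2 u w v) :
    ∀ x ∈ convexHull ℝ T, 0 ≤ det2 u w x := by
  have hc : Convex ℝ {x : Pt | 0 ≤ det2 u w x} := by
    intro x hx y hy s t hs ht hst
    simp only [Set.mem_setOf_eq] at *
    rw [det2_comb _ _ _ _ _ _ hst]
    positivity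
  exact fun x hx => convexHull_min (fun v hv => h v hv) hc hx

theorem interior_pos (T : Set Pt) (u w z : Pt) (hz : 0 < det2 u w z)
    (h : ∀ v ∈ T, 0 ≤ det2 u w v) :
    ∀ x ∈ interior (convexHull ℝ T), 0 < det2 u w x := by
  intro x hx
  have hf : Continuous (fun t : ℝ => x + t • (u - z)) := by fun_prop
  have hn : ∀ᶠ t in nhds (0 : ℝ), x + t • (u - z) ∈ interior (convexHull ℝ T) := by
    apply hf.continuousAt.eventually_mem
    apply isOpen_interior.mem_nhds
    simpa using hx
  obtain ⟨ε, hε, hb⟩ := Metric.eventually_nhds_iff.1 hn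
  have h1 := hb (y := ε / 2) (by simp [abs_of_pos hε]; linarith)
  have h2 := hull_nonneg T u w h _ (interior_subset h1)
  have h3 : det2 u w (x + (ε / 2) • (u - z)) = det2 u w x - (ε / 2) * det2 u w z := by
    simp [det2]; ring
  rw [h3] at h2
  have := mul_pos (half_pos hε) hz
  linarith

theorem mem_tri (p q a x : Pt) (hD : 0 < det2 p q a) (h1 : 0 ≤ det2 q a x)
    (h2 : 0 ≤ det2 a p x) (h3 : 0 ≤ det2 p q x) : x ∈ convexHull ℝ ({p, q, a} : Set Pt) := by
  have hs : det2 q a x + det2 a p x + det2 p q x = det2 p q a := by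
    simp only [det2]; ring
  have hx : x = (det2 q a x / det2 p q a) • p + (det2 a p x / det2 p q a) • q
      + (det2 p q x / det2 p q a) • a := by
    ext i
    have hne := hD.ne'
    simp only [PiLp.add_apply, PiLp.smul_apply, smul_eq_mul]
    field_simp
    fin_cases i <;> simp [det2] <;> ring
  rw [hx]
  have hc := convex_convexHull ℝ ({p, q, a} : Set Pt)
  have := hc.sum_mem (t := Finset.univ) (w := ![det2 q a x / det2 p q a,
      det2 a p x / det2 p q a, det2 p q x / det2 p q a]) (z := ![p, q, a]) ?_ ?_ ?_
  · simpa [Fin.sum_univ_three] using this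
  · intro i _
    fin_cases i <;> simp <;> positivity
  · simp only [Fin.sum_univ_three]
    simp
    rw [← add_div, ← add_div, hs, div_self hD.ne']
  · intro i _
    apply subset_convexHull
    fin_cases i <;> simp

theorem det2_ne (P : Set Pt) (hgp : GenPos P) (a b c : Pt) (ha : a ∈ P) (hb : b ∈ P) (hc : c ∈ P)
    (hab : a ≠ b) (hac : a ≠ c) (hbc : b ≠ c) : det2 a b c ≠ 0 := by
  intro h0
  apply hgp a ha b hb c hc hab hac hbc
  rw [collinear_iff_of_mem (p₀ := a) (by simp)]
  refine ⟨b - a, ?_⟩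
  simp only [det2] at h0
  intro x hx
  simp only [Set.mem_insert_iff, Set.mem_singleton_iff] at hx
  rcases hx with rfl | rfl | rfl
  · exact ⟨0, by simp⟩
  · exact ⟨1, by simp⟩
  · by_cases h : b 0 - a 0 = 0
    · have h' : b 1 - a 1 ≠ 0 := by
        intro h'
        apply hab
        ext i
        fin_cases i
        · simp; linarith
        · simp; linarith
      refine ⟨(x 1 - a 1) / (b 1 - a 1), ?_⟩
      have h5 : x 0 - a 0 = 0 := by
        rw [h] at h0
        have : (b 1 - a 1) * (x 0 - a 0) = 0 := by linarith
        exact (mul_eq_zero.1 this).resolve_left h'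
      ext i
      fin_cases i
      · simp [h]; linarith
      · simp; field_simp; ring
    · refine ⟨(x 0 - a 0) / (b 0 - a 0), ?_⟩
      ext i
      fin_cases i
      · simp; field_simp; ring
      · simp; field_simp; linarith

/-- All ten orientations of the pentagon `p, q, a, b, r` are positive. -/
structure Pent (p q a b r : Pt) : Prop where
  pqa : 0 < det2 p q a
  pqb : 0 < det2 p q b
  pqr : 0 < det2 p q r
  pab : 0 < det2 p a b
  par : 0 < det2 p a r
  pbr : 0 < det2 p b r
  qab : 0 < det2 q a b
  qar : 0 < det2 q a r
  qbr : 0 < det2 q b r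
  abr : 0 < det2 a b r

theorem Pent.cyc {p q a b r : Pt} (h : Pent p q a b r) :
    ∀ i j : Fin 5, j ≠ i → j ≠ i + 1 →
      0 < det2 (![p, q, a, b, r] i) (![p, q, a, b, r] (i + 1)) (![p, q, a, b, r] j) := by
  obtain ⟨h1, h2, h3, h4, h5, h6, h7, h8, h9, h10⟩ := h
  simp only [det2] at *
  intro i j hi hj
  fin_cases i <;> fin_cases j <;> first | exact absurd rfl hi | exact absurd rfl hj | (simp; linarith)

theorem Pent.cyc' {p q a b r : Pt} (h : Pent p q b a r) :
    ∀ i j : Fin 5, j ≠ i → j ≠ i + 1 →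
      0 < - det2 (![p, r, a, b, q] i) (![p, r, a, b, q] (i + 1)) (![p, r, a, b, q] j) := by
  obtain ⟨h1, h2, h3, h4, h5, h6, h7, h8, h9, h10⟩ := h
  simp only [det2] at *
  intro i j hi hj
  fin_cases i <;> fin_cases j <;> first | exact absurd rfl hi | exact absurd rfl hj | (simp; linarith)

theorem pos_of_bary {p q a x u w : Pt} (hD : 0 < det2 p q a) (h1 : 0 < det2 q a x)
    (h2 : 0 < det2 a p x) (h3 : 0 < det2 p q x) (g1 : 0 ≤ det2 u w p) (g2 : 0 < det2 u w q)
    (g3 : 0 ≤ det2 u w a) : 0 < det2 u w x := by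
  have := det2_bary p q a u w x
  have h : 0 < det2 p q a * det2 u w x := by rw [this]; positivity
  exact (mul_pos_iff_of_pos_left hD).1 h

theorem det2_self (u w : Pt) : det2 u w u = 0 := by simp only [det2]; ring
theorem det2_self' (u w : Pt) : det2 u w w = 0 := by simp only [det2]; ring

/-- The replacement of `q` by a point of the open triangle `p q a`. -/
theorem Pent.replace_left {p q a b r x : Pt} (h : Pent p q a b r) (h1 : 0 < det2 q a x)
    (h2 : 0 < det2 a p x) (h3 : 0 < det2 p q x) : Pent p x a b r := by
  have key : ∀ u w, 0 ≤ det2 u w p → 0 < det2 u w q → 0 ≤ det2 u w a → 0 < det2 u w x :=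
    fun u w g1 g2 g3 => pos_of_bary h.pqa h1 h2 h3 g1 g2 g3
  obtain ⟨e1, e2, e3, e4, e5, e6, e7, e8, e9, e10⟩ := h
  have k1 := key b p (by rw [det2_self']) (by simp only [det2] at *; linarith)
    (by simp only [det2] at *; linarith)
  have k2 := key r p (by rw [det2_self']) (by simp only [det2] at *; linarith)
    (by simp only [det2] at *; linarith)
  have k3 := key a b (by simp only [det2] at *; linarith) (by simp only [det2] at *; linarith)
    (by rw [det2_self])
  have k4 := key a r (by simp only [det2] at *; linarith) (by simp only [det2] at *; linarith)
    (by rw [det2_self])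
  have k5 := key b r (by simp only [det2] at *; linarith) (by simp only [det2] at *; linarith)
    (by simp only [det2] at *; linarith)
  constructor <;> first | assumption | (simp only [det2] at *; linarith)

theorem Pent.replace_right {p q a b r x : Pt} (h : Pent p q a b r) (h1 : 0 < det2 r p x)
    (h2 : 0 < det2 p b x) (h3 : 0 < det2 b r x) : Pent p q a b x := by
  have hD : 0 < det2 b r p := by
    have := h.pbr
    simp only [det2] at *; linarith
  have key : ∀ u w, 0 ≤ det2 u w b → 0 < det2 u w r → 0 ≤ det2 u w p → 0 < det2 u w x :=
    fun u w g1 g2 g3 => pos_of_bary hD h1 h2 h3 g1 g2 g3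
  obtain ⟨e1, e2, e3, e4, e5, e6, e7, e8, e9, e10⟩ := h
  have k1 := key p q (by simp only [det2] at *; linarith) (by simp only [det2] at *; linarith)
    (by rw [det2_self])
  have k2 := key p a (by simp only [det2] at *; linarith) (by simp only [det2] at *; linarith)
    (by rw [det2_self])
  have k3 := key q a (by simp only [det2] at *; linarith) (by simp only [det2] at *; linarith)
    (by simp only [det2] at *; linarith)
  have k4 := key q b (by rw [det2_self']) (by simp only [det2] at *; linarith)
    (by simp only [det2] at *; linarith)
  have k5 := key a b (by rw [det2_self']) (by simp only [det2] at *; linarith)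
    (by simp only [det2] at *; linarith)
  constructor <;> first | assumption | (simp only [det2] at *; linarith)

/-- The emptying argument. -/
theorem emptying (P : Set Pt) (hPfin : P.Finite) (p a b : Pt)
    (htri : ∀ x ∈ P, x ∈ convexHull ℝ ({p, a, b} : Set Pt) → x ∈ ({p, a, b} : Set Pt))
    (hex : ∃ q ∈ P, ∃ r ∈ P, Pent p q a b r) :
    ∃ q ∈ P, ∃ r ∈ P, Pent p q a b r ∧
      ∀ x ∈ P, x ∉ interior (convexHull ℝ ({p, q, a, b, r} : Set Pt)) := by
  let T : Set (Pt × Pt) := {z ∈ P ×ˢ P | Pent p z.1 a b z.2}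
  have hT : T.Finite := (hPfin.prod hPfin).subset (fun z hz => hz.1)
  have hTn : T.Nonempty := by
    obtain ⟨q, hq, r, hr, h⟩ := hex
    exact ⟨(q, r), ⟨hq, hr⟩, h⟩
  obtain ⟨⟨q, r⟩, ⟨⟨hq, hr⟩, h⟩, hmin⟩ :=
    hT.exists_minimalFor (fun z : Pt × Pt => det2 p z.1 a + det2 p b z.2) T hTn
  simp only at hq hr h
  refine ⟨q, hq, r, hr, h, fun x hx hxi => ?_⟩
  have h' := h
  obtain ⟨e1, e2, e3, e4, e5, e6, e7, e8, e9, e10⟩ := h'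
  have ed : ∀ u w z, 0 < det2 u w z → 0 ≤ det2 u w p → 0 ≤ det2 u w q → 0 ≤ det2 u w a →
      0 ≤ det2 u w b → 0 ≤ det2 u w r → 0 < det2 u w x := by
    intro u w z hz g1 g2 g3 g4 g5
    refine interior_pos _ u w z hz ?_ x hxi
    intro v hv
    simp only [Set.mem_insert_iff, Set.mem_singleton_iff] at hv
    rcases hv with rfl | rfl | rfl | rfl | rfl <;> assumption
  have i1 := ed p q a e1 (by simp only [det2] at *; linarith) (by simp only [det2] at *; linarith)
    (by simp only [det2] at *; linarith) (by simp only [det2] at *; linarith)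
    (by simp only [det2] at *; linarith)
  have i2 := ed q a b e7 (by simp only [det2] at *; linarith) (by simp only [det2] at *; linarith)
    (by simp only [det2] at *; linarith) (by simp only [det2] at *; linarith)
    (by simp only [det2] at *; linarith)
  have i3 := ed a b r e10 (by simp only [det2] at *; linarith) (by simp only [det2] at *; linarith)
    (by simp only [det2] at *; linarith) (by simp only [det2] at *; linarith)
    (by simp only [det2] at *; linarith)
  have i4 := ed b r p (by simp only [det2] at *; linarith) (by simp only [det2] at *; linarith)
    (by simp only [det2] at *; linarith) (by simp only [det2] at *; linarith)
    (by simp only [det2] at *; linarith) (by simp only [det2] at *; linarith)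
  have i5 := ed r p q (by simp only [det2] at *; linarith) (by simp only [det2] at *; linarith)
    (by simp only [det2] at *; linarith) (by simp only [det2] at *; linarith)
    (by simp only [det2] at *; linarith) (by simp only [det2] at *; linarith)
  by_cases c1 : 0 < det2 a p x
  · have hn := h.replace_left i2 c1 i1
    have hm := hmin (j := (x, r)) ⟨⟨hx, hr⟩, hn⟩
    have hlt : det2 p x a < det2 p q a := by simp only [det2] at *; linarith
    simp only at hm
    have := hm (by linarith)
    linarith
  by_cases c2 : 0 < det2 p b x
  · have hn := h.replace_right i5 c2 i4
    have hm := hmin (j := (q, x)) ⟨⟨hq, hx⟩, hn⟩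
    have hlt : det2 p b x < det2 p b r := by simp only [det2] at *; linarith
    simp only at hm
    have := hm (by linarith)
    linarith
  have hmem := htri x hx (mem_tri p a b x e4 i3.le (by simp only [det2] at *; linarith)
    (by simp only [det2] at *; linarith))
  simp only [Set.mem_insert_iff, Set.mem_singleton_iff] at hmem
  rcases hmem with rfl | rfl | rfl
  · rw [det2_self] at i1; exact lt_irrefl _ i1
  · rw [det2_self] at i3; exact lt_irrefl _ i3
  · rw [det2_self'] at i3; exact lt_irrefl _ i3

theorem core (P : Set Pt) (hPfin : P.Finite) (hgp : GenPos P)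
    (a b : Pt) (ha : a ∈ P) (hb : b ∈ P)
    (S : Set Pt) (hSP : S ⊆ P) (haS : a ∉ S) (hbS : b ∉ S)
    (hside : ∀ s ∈ S, 0 < det2 a b s)
    (htri : ∀ s ∈ S, ∀ x ∈ P, x ∈ convexHull ℝ ({s, a, b} : Set Pt) →
      x ∈ ({s, a, b} : Set Pt))
    (p : Pt) (hp : p ∈ S) (hpc : p ∈ convexHull ℝ (S \ {p})) :
    ∃ q ∈ P, ∃ r ∈ P, Pent p q a b r ∧
      ∀ x ∈ P, x ∉ interior (convexHull ℝ ({p, q, a, b, r} : Set Pt)) := by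
  apply emptying P hPfin p a b (htri p hp)
  have hne : ∀ s ∈ S, s ≠ a ∧ s ≠ b := fun s hs =>
    ⟨fun h => haS (h ▸ hs), fun h => hbS (h ▸ hs)⟩
  have abp := hside p hp
  let L : Set Pt := {q ∈ S | 0 < det2 a p q ∧ 0 < det2 b p q}
  let R : Set Pt := {q ∈ S | 0 < det2 p a q ∧ 0 < det2 p b q}
  have hLR : S \ {p} ⊆ L ∪ R := by
    rintro q ⟨hq, hqp⟩
    have hqp : q ≠ p := hqp
    have abq := hside q hq
    have n1 := det2_ne P hgp a p q ha (hSP hp) (hSP hq) (hne p hp).1.symm (hne q hq).1.symm hqp.symm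
    have n2 := det2_ne P hgp b p q hb (hSP hp) (hSP hq) (hne p hp).2.symm (hne q hq).2.symm hqp.symm
    rcases lt_or_gt_of_ne n1 with m1 | m1 <;> rcases lt_or_gt_of_ne n2 with m2 | m2
    · right
      exact ⟨hq, by rw [det2_swap]; linarith, by rw [det2_swap]; linarith⟩
    · exfalso
      have := htri p hp q (hSP hq) (mem_tri p a b q (by rw [det2_cyc]; exact abp) abq.le m2.le
        (by rw [det2_swap]; linarith))
      simp only [Set.mem_insert_iff, Set.mem_singleton_iff] at this
      have := hne q hq
      tauto
    · exfalso
      have := htri q hq p (hSP hp) (mem_tri q a b p (by rw [det2_cyc]; exact abq) abp.le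
        (by simp only [det2] at *; linarith) (by simp only [det2] at *; linarith))
      simp only [Set.mem_insert_iff, Set.mem_singleton_iff] at this
      have := hne p hp
      have := hqp.symm
      tauto
    · left
      exact ⟨hq, m1, m2⟩
  have hex : ∃ q ∈ L, ∃ r ∈ R, 0 < det2 p q r := by
    by_contra hcon
    push Not at hcon
    have hneg : ∀ q ∈ L, ∀ r ∈ R, 0 < det2 p r q := by
      intro q hq r hr
      have h0 := hcon q hq r hr
      have q1 := hq.2.1
      have r1 := hr.2.1
      have hpq : p ≠ q := by
        rintro rfl; rw [det2_self'] at q1; exact lt_irrefl _ q1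
      have hpr : p ≠ r := by
        rintro rfl; rw [det2_self] at r1; exact lt_irrefl _ r1
      have hrq : r ≠ q := by
        rintro rfl; rw [det2_swap] at r1; linarith
      have := det2_ne P hgp p r q (hSP hp) (hSP hr.1) (hSP hq.1) hpr hpq hrq
      have h2 : det2 p q r = - det2 p r q := by simp only [det2]; ring
      rw [h2] at h0
      exact lt_of_le_of_ne (by linarith) this.symm
    have hp2 := convexHull_mono hLR hpc
    rcases L.eq_empty_or_nonempty with hL | hL
    · rw [hL, Set.empty_union] at hp2
      have := hull_pos R p a (fun v hv => hv.2.1) p hp2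
      rw [det2_self] at this; exact lt_irrefl _ this
    rcases R.eq_empty_or_nonempty with hR | hR
    · rw [hR, Set.union_empty] at hp2
      have := hull_pos L a p (fun v hv => hv.2.1) p hp2
      rw [det2_self'] at this; exact lt_irrefl _ this
    rw [convexHull_union hL hR, mem_convexJoin] at hp2
    obtain ⟨x, hx, y, hy, hseg⟩ := hp2
    have h1 : ∀ r ∈ R, 0 < det2 p r x := fun r hr =>
      hull_pos L p r (fun v hv => hneg v hv r hr) x hx
    have h2 : 0 < det2 x p y := hull_pos R x p (fun v hv => by
      rw [det2_cyc]; exact h1 v hv) y hy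
    obtain ⟨s, t, hs, ht, hst, hpe⟩ := hseg
    have h3 := det2_comb x y x y s t hst
    rw [hpe, det2_self, det2_self'] at h3
    have h4 : det2 x p y = - det2 x y p := by simp only [det2]; ring
    rw [h4, h3] at h2
    simp at h2
  obtain ⟨q, hq, r, hr, pqr⟩ := hex
  refine ⟨q, hSP hq.1, r, hSP hr.1, ?_⟩
  obtain ⟨hqS, q1, q2⟩ := hq
  obtain ⟨hrS, r1, r2⟩ := hr
  have abq := hside q hqS
  have abr := hside r hrS
  have pqa : 0 < det2 p q a := by rw [← det2_cyc]; exact q1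
  have pqb : 0 < det2 p q b := by rw [← det2_cyc]; exact q2
  have qar : 0 < det2 q a r := by
    have id1 : det2 a b p * det2 q a r = det2 a b r * det2 a p q + det2 a b q * det2 p a r := by
      simp only [det2]; ring
    exact (mul_pos_iff_of_pos_left abp).1 (by rw [id1]; positivity)
  have qbr : 0 < det2 q b r := by
    have id1 : det2 a b p * det2 q b r = det2 a b r * det2 b p q + det2 a b q * det2 p b r := by
      simp only [det2]; ring
    exact (mul_pos_iff_of_pos_left abp).1 (by rw [id1]; positivity)
  exact ⟨pqa, pqb, pqr, by rw [det2_cyc]; exact abp, r1, r2, by rw [det2_cyc]; exact abq,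
    qar, qbr, abr⟩

/-- let `a, b ∈ P` be distinct and let `S ⊆ P` be a set of
points, each forming an empty triangle with `a` and `b`, all lying strictly on
the same side of the line `ab`. If for every `s ∈ S` there is no 5-hole of `P`
of the form `s, q', a, b, r'`, then `S` is in convex position. -/
theorem stmt17 (P : Set Pt) (hPfin : P.Finite) (hgp : GenPos P)
    (a b : Pt) (ha : a ∈ P) (hb : b ∈ P) (hab : a ≠ b)
    (S : Set Pt) (hSP : S ⊆ P) (haS : a ∉ S) (hbS : b ∉ S)
    (hside : ∃ σ : ℝ, (σ = 1 ∨ σ = -1) ∧ ∀ s ∈ S, 0 < σ * det2 a b s)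
    (htri : ∀ s ∈ S, ∀ x ∈ P, x ∈ convexHull ℝ ({s, a, b} : Set Pt) →
      x ∈ ({s, a, b} : Set Pt))
    (hno5 : ∀ s ∈ S, ¬ ∃ q' ∈ P, ∃ r' ∈ P,
      ConvexCyclicOrder ![s, q', a, b, r'] ∧
      ∀ x ∈ P, x ∉ interior (convexHull ℝ ({s, q', a, b, r'} : Set Pt))) :
    ConvexPos S := by
  intro p hp hpc
  apply hno5 p hp
  obtain ⟨σ, hσ, hs⟩ := hside
  rcases hσ with rfl | rfl
  · obtain ⟨q, hq, r, hr, h, he⟩ := core P hPfin hgp a b ha hb S hSP haS hbS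
      (fun s hsS => by simpa using hs s hsS) htri p hp hpc
    refine ⟨q, hq, r, hr, ⟨1, Or.inl rfl, fun i j hi hj => ?_⟩, he⟩
    rw [one_mul]
    exact h.cyc i j hi hj
  · have hset : ∀ s : Pt, ({s, b, a} : Set Pt) = {s, a, b} := fun s => by
      rw [Set.pair_comm b a]
    obtain ⟨q, hq, r, hr, h, he⟩ := core P hPfin hgp b a hb ha S hSP hbS haS
      (fun s hsS => by
        have := hs s hsS
        rw [det2_swap]; linarith) (fun s hsS => by rw [hset]; exact htri s hsS) p hp hpc
    refine ⟨r, hr, q, hq, ⟨-1, Or.inr rfl, fun i j hi hj => ?_⟩, ?_⟩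
    · rw [neg_one_mul]
      exact h.cyc' i j hi hj
    · have : ({p, r, a, b, q} : Set Pt) = {p, q, b, a, r} := by
        ext z
        simp only [Set.mem_insert_iff, Set.mem_singleton_iff]
        tauto
      rw [this]; exact he
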